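/- Let q ∈ [2, 6] and r ∈ [1, 2) be real exponents. For every σ > 0 there exists a constant C_σ > 0 (depending only on σ, q, r) such that for every R > 0, every s, t with 3R/2 ≤ s < t ≤ 2R, every smooth vector field v : ℝ³ → ℝ³ and every smooth function θ : ℝ³ → ℝ, the quantity J₅ = (t−s)^{−1} ∫_{B_t∖B_s} |v| |θ − θ̄_R| dx satisfies J₅ ≤ σ ‖θ − θ̄_R‖²_{L^6(B_t∖B_R)} + C_σ (t−s)^{−2(6−r)/(6+r)} R^{3(q−2)(6−r)/(q(6+r))} ‖v‖_{L^q(B_{2R}∖B_R)}^{2(6−r)/(6+r)} ‖θ − θ̄_R‖_{L^r(B_{2R}∖B_R)}^{4r/(6+r)} (the inequality interpreted in the extended nonnegative reals). -/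

import Mathlib

/-!
Write `w = θ - θ̄_R` and `A = B_t ∖ B_s`, which lies in both `B_t ∖ B_R` and `B_{2R} ∖ B_R`.

* Cauchy–Schwarz gives `∫_A |v| |w| ≤ ‖v‖_{L²(A)} ‖w‖_{L²(A)}` (`lintegral_norm_mul_le`).
* Since `A` has measure at most `|B_2| R³`, Hölder gives
  `‖v‖_{L²(A)} ≤ (|B_2| R³)^{1/2 - 1/q} ‖v‖_{L^q(A)}` (`LpS_two_le`).
* Interpolating `L²` between `L^r` and `L⁶` gives `‖w‖_2 ≤ ‖w‖_r^α ‖w‖_6^{1-α}` with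
  `α = 2r/(6-r)` (`LpS_interpolation`).
* Young's inequality with the conjugate exponents `2/(1-α) = 2(6-r)/(6-3r)` and
  `2/(1+α) = 2(6-r)/(6+r)` splits off `σ ‖w‖_6²` (`young_weighted`).
-/

open MeasureTheory Metric Filter
open scoped ENNReal NNReal

noncomputable section

/-- Euclidean `ℝ³`. -/
abbrev E3 := EuclideanSpace ℝ (Fin 3)

/-- The annulus `B_{2R} \ B_R` centered at the origin. -/
def Ann (R : ℝ) : Set E3 := ball (0 : E3) (2 * R) \ ball (0 : E3) R

/-- Mean value of `θ` over the annulus `B_{2R} \ B_R`. -/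
def thetaBar (θ : E3 → ℝ) (R : ℝ) : ℝ := ⨍ x in Ann R, θ x

/-- `L^p` norm (with real exponent `p`) of `f` over the set `s`, valued in `ℝ≥0∞`. -/
def LpS {F : Type*} [NormedAddCommGroup F] (f : E3 → F) (p : ℝ) (s : Set E3) : ℝ≥0∞ :=
  eLpNorm f (ENNReal.ofReal p) (volume.restrict s)

theorem LpS_eq_lintegral {F : Type*} [NormedAddCommGroup F] (f : E3 → F) {p : ℝ} (hp : 0 < p)
    (s : Set E3) : LpS f p s = (∫⁻ x in s, ‖f x‖ₑ ^ p) ^ (1 / p) := by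
  unfold LpS
  rw [eLpNorm_eq_lintegral_rpow_enorm_toReal (by simpa using hp) ENNReal.ofReal_ne_top,
    ENNReal.toReal_ofReal hp.le]

theorem LpS_mono {F : Type*} [NormedAddCommGroup F] (f : E3 → F) (p : ℝ) {s t : Set E3}
    (h : s ⊆ t) : LpS f p s ≤ LpS f p t :=
  eLpNorm_mono_measure f (Measure.restrict_mono h le_rfl)

/-- Cauchy–Schwarz in terms of `LpS`. -/
theorem lintegral_norm_mul_le {v : E3 → E3} {w : E3 → ℝ} (hv : Continuous v) (hw : Continuous w)
    (A : Set E3) :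
    ∫⁻ x in A, ENNReal.ofReal (‖v x‖ * |w x|) ≤ LpS v 2 A * LpS w 2 A := by
  rw [LpS_eq_lintegral v two_pos, LpS_eq_lintegral w two_pos]
  refine le_trans (le_of_eq ?_) (ENNReal.lintegral_mul_le_Lp_mul_Lq (volume.restrict A)
    Real.HolderConjugate.two_two (f := fun x => ‖v x‖ₑ) (g := fun x => ‖w x‖ₑ)
    hv.enorm.measurable.aemeasurable hw.enorm.measurable.aemeasurable)
  refine lintegral_congr fun x => ?_
  rw [ENNReal.ofReal_mul (norm_nonneg _), Pi.mul_apply, ofReal_norm,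
    ← Real.norm_eq_abs, ofReal_norm]

/-- Interpolation of `L²` between `L^r` and `L⁶`. -/
theorem LpS_interpolation {r : ℝ} (hr : 1 ≤ r ∧ r < 2) {w : E3 → ℝ} (hw : Continuous w)
    (A : Set E3) :
    LpS w 2 A ≤ LpS w r A ^ (2 * r / (6 - r)) * LpS w 6 A ^ ((6 - 3 * r) / (6 - r)) := by
  obtain ⟨h1, h2⟩ := hr
  have h6 : 0 < 6 - r := by linarith
  have hr0 : 0 < r := by linarith
  rw [LpS_eq_lintegral w two_pos, LpS_eq_lintegral w hr0, LpS_eq_lintegral w (by norm_num)]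
  have hm : ∀ p : ℝ, AEMeasurable (fun x => ‖w x‖ₑ ^ p) (volume.restrict A) := fun p =>
    (hw.enorm.measurable.pow_const p).aemeasurable
  -- The weights `a = 4/(6-r)`, `b = (2-r)/(6-r)` solve `a + b = 1`, `r a + 6 b = 2`.
  have key := ENNReal.lintegral_mul_norm_pow_le (hm r) (hm 6)
    (p := 4 / (6 - r)) (q := (2 - r) / (6 - r)) (by positivity)
    (div_nonneg (by linarith) h6.le) (by field_simp; ring)
  have hint : ∫⁻ x in A, ‖w x‖ₑ ^ (2 : ℝ)
      = ∫⁻ x in A, (‖w x‖ₑ ^ r) ^ (4 / (6 - r)) * (‖w x‖ₑ ^ (6 : ℝ)) ^ ((2 - r) / (6 - r)) := by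
    refine lintegral_congr fun x => ?_
    rw [← ENNReal.rpow_mul, ← ENNReal.rpow_mul, ← ENNReal.rpow_add_of_nonneg _ _ (by positivity)
      (mul_nonneg (by norm_num) (div_nonneg (by linarith) h6.le))]
    congr 1
    field_simp
    ring
  rw [hint]
  refine (ENNReal.rpow_le_rpow key (by norm_num)).trans (le_of_eq ?_)
  rw [ENNReal.mul_rpow_of_nonneg _ _ (by norm_num)]
  simp only [← ENNReal.rpow_mul]
  congr 2
  · field_simp
    ring
  · field_simp
    ring

/-- Hölder's inequality against the constant `1` on a subset of `B_{2R}`. -/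
theorem LpS_two_le {q : ℝ} (hq : 2 ≤ q) {R : ℝ} (hR : 0 < R) {v : E3 → E3} (hv : Continuous v)
    {A : Set E3} (hA : A ⊆ ball (0 : E3) (2 * R)) :
    LpS v 2 A ≤ LpS v q A *
      (ENNReal.ofReal (R ^ 3 * (volume (ball (0 : E3) 2)).toReal)) ^ (1 / 2 - 1 / q) := by
  have hvol : (volume.restrict A) Set.univ
      ≤ ENNReal.ofReal (R ^ 3 * (volume (ball (0 : E3) 2)).toReal) := by
    rw [Measure.restrict_apply_univ, ENNReal.ofReal_mul (by positivity),
      ENNReal.ofReal_toReal measure_ball_lt_top.ne]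
    refine (measure_mono hA).trans (le_of_eq ?_)
    rw [mul_comm 2 R, Measure.addHaar_ball_mul_of_pos volume (0 : E3) hR 2]
    simp
  have h := eLpNorm_le_eLpNorm_mul_rpow_measure_univ (μ := volume.restrict A) (f := v)
    (ENNReal.ofReal_le_ofReal hq) hv.aestronglyMeasurable
  rw [ENNReal.toReal_ofReal (by norm_num), ENNReal.toReal_ofReal (by linarith)] at h
  refine h.trans ?_
  unfold LpS
  gcongr
  have := one_div_le_one_div_of_le two_pos hq
  linarith

/-- Young's inequality with a small weight `σ` on one of the two terms. -/
theorem young_weighted {p p' : ℝ} (h : p.HolderConjugate p') {σ : ℝ} (hσ : 0 < σ) (X Y : ℝ≥0∞) :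
    X * Y ≤ ENNReal.ofReal σ * Y ^ p + ENNReal.ofReal (σ ^ (-(p' / p))) * X ^ p' := by
  have hε : 0 < σ ^ (1 / p) := Real.rpow_pos_of_pos hσ _
  have hXY : X * Y = (ENNReal.ofReal (σ ^ (1 / p)) * Y) * (ENNReal.ofReal (σ ^ (-(1 / p))) * X) := by
    have : ENNReal.ofReal (σ ^ (1 / p)) * ENNReal.ofReal (σ ^ (-(1 / p))) = 1 := by
      rw [← ENNReal.ofReal_mul hε.le, ← Real.rpow_add hσ]
      simp
    calc X * Y = 1 * (X * Y) := (one_mul _).symm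
      _ = _ := by rw [← this]; ring
  have hdiv : ∀ {e : ℝ} (a : ℝ≥0∞), 1 ≤ e → a / ENNReal.ofReal e ≤ a := fun a he =>
    ENNReal.div_le_of_le_mul (le_mul_of_one_le_right' (by simpa using he))
  rw [hXY]
  refine (ENNReal.young_inequality _ _ h).trans (add_le_add ?_ ?_)
  · refine (hdiv _ h.lt.le).trans (le_of_eq ?_)
    rw [ENNReal.mul_rpow_of_nonneg _ _ h.nonneg,
      ENNReal.ofReal_rpow_of_pos hε, ← Real.rpow_mul hσ.le, one_div_mul_cancel h.ne_zero,
      Real.rpow_one]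
  · refine (hdiv _ h.symm.lt.le).trans (le_of_eq ?_)
    rw [ENNReal.mul_rpow_of_nonneg _ _ h.symm.nonneg,
      ENNReal.ofReal_rpow_of_pos (Real.rpow_pos_of_pos hσ _), ← Real.rpow_mul hσ.le]
    congr 4
    ring

theorem J5_estimate_v (q r : ℝ) (hq : 2 ≤ q ∧ q ≤ 6) (hr : 1 ≤ r ∧ r < 2) :
    ∀ σ : ℝ, 0 < σ → ∃ Cσ : ℝ, 0 < Cσ ∧
      ∀ R s t : ℝ, 0 < R → 3 * R / 2 ≤ s → s < t → t ≤ 2 * R →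
      ∀ v : E3 → E3, ∀ θ : E3 → ℝ, ContDiff ℝ (⊤ : ℕ∞) v → ContDiff ℝ (⊤ : ℕ∞) θ →
        ENNReal.ofReal ((t - s)⁻¹) *
          ∫⁻ x in ball (0 : E3) t \ ball (0 : E3) s,
            ENNReal.ofReal (‖v x‖ * |θ x - thetaBar θ R|)
        ≤ ENNReal.ofReal σ * LpS (fun x => θ x - thetaBar θ R) 6 (ball (0 : E3) t \ ball (0 : E3) R) ^ 2
          + ENNReal.ofReal Cσ * ENNReal.ofReal ((t - s) ^ (-(2 * (6 - r) / (6 + r)))) *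
              ENNReal.ofReal (R ^ (3 * (q - 2) * (6 - r) / (q * (6 + r)))) *
              LpS v q (Ann R) ^ (2 * (6 - r) / (6 + r)) *
              LpS (fun x => θ x - thetaBar θ R) r (Ann R) ^ (4 * r / (6 + r)) := by
  intro σ hσ
  obtain ⟨hr1, hr2⟩ := hr
  have h6m : 0 < 6 - r := by linarith
  have h6p : 0 < 6 + r := by linarith
  have h63 : 0 < 6 - 3 * r := by linarith
  have hq0 : 0 < q := by linarith [hq.1]
  set p' : ℝ := 2 * (6 - r) / (6 + r) with hp'
  set p : ℝ := 2 * (6 - r) / (6 - 3 * r) with hp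
  have hp'0 : 0 < p' := by positivity
  have hconj : p.HolderConjugate p' := by
    rw [Real.holderConjugate_iff]
    refine ⟨?_, ?_⟩
    · rw [hp, lt_div_iff₀ h63]
      linarith
    · rw [hp, hp']
      field_simp
      ring
  set M : ℝ := (volume (ball (0 : E3) 2)).toReal with hM
  have hM0 : 0 < M :=
    ENNReal.toReal_pos (measure_ball_pos volume (0 : E3) two_pos).ne' measure_ball_lt_top.ne
  refine ⟨σ ^ (-(p' / p)) * (M ^ (1 / 2 - 1 / q)) ^ p', by positivity, ?_⟩
  intro R s t hR hs hst ht v θ hv hθ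
  set w : E3 → ℝ := fun x => θ x - thetaBar θ R with hw
  have hwc : Continuous w := hθ.continuous.sub continuous_const
  set A : Set E3 := ball (0 : E3) t \ ball (0 : E3) s with hA
  have hRs : ball (0 : E3) R ⊆ ball (0 : E3) s := ball_subset_ball (by linarith)
  have hA1 : A ⊆ ball (0 : E3) t \ ball (0 : E3) R := Set.sdiff_subset_sdiff_right hRs
  have hA2 : A ⊆ Ann R := Set.sdiff_subset_sdiff (ball_subset_ball ht) hRs
  have hA3 : A ⊆ ball (0 : E3) (2 * R) := hA2.trans Set.sdiff_subset
  have hts : 0 < t - s := by linarith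
  set V := LpS v q (Ann R)
  set Wr := LpS w r (Ann R)
  set W6 := LpS w 6 (ball (0 : E3) t \ ball (0 : E3) R)
  set N : ℝ := (t - s)⁻¹ * (R ^ 3 * M) ^ (1 / 2 - 1 / q) with hN
  have hN0 : 0 < N := by positivity
  have hmain : ENNReal.ofReal ((t - s)⁻¹) * ∫⁻ x in A, ENNReal.ofReal (‖v x‖ * |w x|)
      ≤ (ENNReal.ofReal N * V * Wr ^ (2 * r / (6 - r))) * W6 ^ ((6 - 3 * r) / (6 - r)) := by
    have e1 : LpS v 2 A ≤ V * (ENNReal.ofReal (R ^ 3 * M)) ^ (1 / 2 - 1 / q) :=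
      (LpS_two_le hq.1 hR hv.continuous hA3).trans (by gcongr; exact LpS_mono v q hA2)
    have e2 : LpS w 2 A ≤ Wr ^ (2 * r / (6 - r)) * W6 ^ ((6 - 3 * r) / (6 - r)) := by
      refine (LpS_interpolation ⟨hr1, hr2⟩ hwc A).trans (mul_le_mul' ?_ ?_)
      · exact ENNReal.rpow_le_rpow (LpS_mono w r hA2) (by positivity)
      · exact ENNReal.rpow_le_rpow (LpS_mono w 6 hA1) (by positivity)
    calc _ ≤ ENNReal.ofReal ((t - s)⁻¹) *
          ((V * (ENNReal.ofReal (R ^ 3 * M)) ^ (1 / 2 - 1 / q)) *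
            (Wr ^ (2 * r / (6 - r)) * W6 ^ ((6 - 3 * r) / (6 - r)))) := by
          gcongr
          exact (lintegral_norm_mul_le hv.continuous hwc A).trans (mul_le_mul' e1 e2)
      _ = _ := by
          rw [hN, ENNReal.ofReal_rpow_of_pos (by positivity), ENNReal.ofReal_mul (by positivity)]
          ring
  refine hmain.trans ((young_weighted hconj hσ _ _).trans (le_of_eq ?_))
  have hNp : N ^ p' = (M ^ (1 / 2 - 1 / q)) ^ p' * (t - s) ^ (-p') *
      R ^ (3 * (q - 2) * (6 - r) / (q * (6 + r))) := by
    rw [hN, Real.mul_rpow (by positivity) (by positivity),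
      Real.mul_rpow (by positivity) (by positivity),
      Real.mul_rpow (by positivity) (by positivity), Real.inv_rpow hts.le,
      ← Real.rpow_neg hts.le, ← Real.rpow_natCast R 3, ← Real.rpow_mul hR.le,
      ← Real.rpow_mul hR.le]
    have : ((3 : ℕ) : ℝ) * (1 / 2 - 1 / q) * p' = 3 * (q - 2) * (6 - r) / (q * (6 + r)) := by
      rw [hp']
      push_cast
      field_simp
    rw [this]
    ring
  congr 1
  · rw [← ENNReal.rpow_mul, ← ENNReal.rpow_natCast]
    congr 2
    rw [hp]
    push_cast
    field_simp
  · rw [ENNReal.mul_rpow_of_nonneg _ _ hp'0.le, ENNReal.mul_rpow_of_nonneg _ _ hp'0.le,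
      ENNReal.ofReal_rpow_of_pos hN0, hNp, ENNReal.ofReal_mul (by positivity),
      ENNReal.ofReal_mul (by positivity), ENNReal.ofReal_mul (by positivity), ← ENNReal.rpow_mul]
    have : 2 * r / (6 - r) * p' = 4 * r / (6 + r) := by
      rw [hp']
      field_simp
      ring
    rw [this]
    ring
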